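/- Suppose the complex-valued potential q satisfies condition A for x ≥ x₀ with constant C > 0. Then there exists an open neighborhood Υ of 0 in ℂ such that for every λ ∈ Υ, the potential q−λ satisfies condition A for x ≥ x₀ with the common constant C/2; that is, writing p_λ(x)=√(q(x)−λ) for the branch with Re p_λ(x)>0 on [x₀,+∞), one has Re p_λ(x) ≥ C/2 + (1/2)|p_λ′(x)/p_λ(x)| for a.e. x ≥ x₀ and all λ ∈ Υ. -/

import Mathlib

/-!
The square root stays away from the imaginary axis: the a.e. inequality gives `C ≤ Re p` a.e. on
`[x₀,∞)`, and `Re √z = √((‖z‖ + Re z)/2)` is continuous in `z` on all of `ℂ`, so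
`C ≤ Re p` holds everywhere on `[x₀,∞)` (`le_re_sqrtQ`).

Let `‖lam‖ < C²/6`, `p = √q`, `w = √(q - lam)`. From `(p - w)(p + w) = lam` and `Re (p + w) ≥ C` one
gets `‖p - w‖ ≤ ‖lam‖/C`, hence `Re w > 0`; this forces `q - lam` off the negative half-axis, i.e.
into `Π₀`. Moreover `p'/p = q'/(2q)`, so the logarithmic derivative is multiplied by
`‖q‖/‖q - lam‖ ≤ 1/(1 - ‖lam‖/R²) ≤ 1 + 2‖lam‖/R²`, where `R = Re p`. Since `R` need not be bounded,
the gain of `R²` here (rather than `C²`) is essential: it gives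
`(R - C)(1 + 2‖lam‖/R²) ≤ R - C + 2‖lam‖/C`. Altogether the loss is at most `3‖lam‖/C ≤ C/2`.
-/


open MeasureTheory Filter Topology Complex

noncomputable section

/-- The open sector `Π_κ = {z ≠ 0 : arg z ∈ (-π+κ, π-κ)}`. -/
def PiSector (κ : ℝ) : Set ℂ :=
  {z : ℂ | z ≠ 0 ∧ -Real.pi + κ < z.arg ∧ z.arg < Real.pi - κ}

/-- `f` is locally absolutely continuous on `[a,∞)` with a.e. derivative `f'`:
`f'` is locally integrable there and `f` is recovered from `f'` by integration. -/
def LocACOn (f f' : ℝ → ℂ) (a : ℝ) : Prop :=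
  (∀ b, a ≤ b → IntervalIntegrable f' volume a b) ∧
  ∀ x, a ≤ x → f x = f a + ∫ t in a..x, f' t

/-- `y` (with first derivative `y'`) is a solution of `-y'' + q y = f` on `ℝ₊`:
`y, y'` are locally absolutely continuous on `[0,∞)` and the a.e. derivative of
`y'` equals `q y - f`. -/
def IsSol (q f y y' : ℝ → ℂ) : Prop :=
  LocACOn y y' 0 ∧ LocACOn y' (fun x => q x * y x - f x) 0

/-- `y` is nontrivial on `ℝ₊`. -/
def NontrivialSol (y : ℝ → ℂ) : Prop := ∃ x, 0 ≤ x ∧ y x ≠ 0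

/-- membership in the weighted space `L₂(ℝ₊, w)`. -/
def MemL2 (w : ℝ → ℝ) (f : ℝ → ℂ) : Prop :=
  AEStronglyMeasurable f (volume.restrict (Set.Ici (0:ℝ))) ∧
  IntegrableOn (fun x => w x * ‖f x‖ ^ 2) (Set.Ici (0:ℝ)) volume

/-- the branch `p = √q` with positive real part (principal branch). -/
def sqrtQ (q : ℝ → ℂ) (x : ℝ) : ℂ := (q x) ^ ((1 : ℂ) / 2)

/-- the a.e. derivative of `sqrtQ q`, where `q'` is the a.e. derivative of `q`. -/
def sqrtQD (q q' : ℝ → ℂ) (x : ℝ) : ℂ := q' x / (2 * sqrtQ q x)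

/-- the weight `ρ = Re p - (1/2)|p'/p|`. -/
def rho (q q' : ℝ → ℂ) (x : ℝ) : ℝ :=
  (sqrtQ q x).re - (1 / 2) * ‖sqrtQD q q' x / sqrtQ q x‖

/-- Condition A for `q` on `[x₀,∞)` with constant `C`, where `q'` is the
a.e. derivative of `q`: `q ∈ L¹loc(ℝ₊)`, `q` is locally absolutely continuous
on `[x₀,∞)`, `q` takes values in a sector `Π_κ` on `[x₀,∞)`, the branch
`p = √q` has positive real part there, and
`Re p ≥ C + (1/2)|p'/p|` a.e. on `[x₀,∞)`. -/
def CondA (q q' : ℝ → ℂ) (x₀ C : ℝ) : Prop :=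
  LocallyIntegrableOn q (Set.Ici (0:ℝ)) volume ∧
  LocACOn q q' x₀ ∧
  (∃ κ, 0 ≤ κ ∧ ∀ x, x₀ ≤ x → q x ∈ PiSector κ) ∧
  (∀ x, x₀ ≤ x → 0 < (sqrtQ q x).re) ∧
  0 < C ∧
  ∀ᵐ x : ℝ, x₀ ≤ x → C + (1 / 2) * ‖sqrtQD q q' x / sqrtQ q x‖ ≤ (sqrtQ q x).re

/-- The set `𝒩` of spectral parameters `lam` such that `q - lam` satisfies
condition A for `x ≥ x₁(lam)` for some `x₁(lam) ≥ 0` (note `(q - lam)' = q'`). -/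
def NSet (q q' : ℝ → ℂ) : Set ℂ :=
  {lam : ℂ | ∃ x₁ C, 0 ≤ x₁ ∧ CondA (fun x => q x - lam) q' x₁ C}

lemma sqrt_sq (z : ℂ) : (z ^ ((1 : ℂ) / 2)) ^ 2 = z := by
  rw [one_div]
  exact_mod_cast Complex.cpow_nat_inv_pow z two_ne_zero

lemma sqrt_re (z : ℂ) : (z ^ ((1 : ℂ) / 2)).re = √((‖z‖ + z.re) / 2) := by
  rw [one_div, Complex.cpow_inv_two_re]

lemma mem_piSector_zero {z : ℂ} (h : 0 < (z ^ ((1 : ℂ) / 2)).re) : z ∈ PiSector 0 := by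
  rw [sqrt_re, Real.sqrt_pos] at h
  have hz : z ∈ slitPlane := by
    by_contra hz
    rw [mem_slitPlane_iff] at hz
    push Not at hz
    have : ‖z‖ = -z.re := by
      rw [← Complex.re_add_im z, hz.2]
      simp [abs_of_nonpos hz.1]
    linarith
  rw [mem_slitPlane_iff_arg] at hz
  refine ⟨hz.2, ?_, ?_⟩
  · simpa using neg_pi_lt_arg z
  · simpa using lt_of_le_of_ne (arg_le_pi z) hz.1

lemma LocACOn.continuousOn {f f' : ℝ → ℂ} {a : ℝ} (h : LocACOn f f' a) :
    ContinuousOn f (Set.Ici a) := by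
  intro x hx
  have hx' : a ≤ x := hx
  have hab : a ≤ x + 1 := by linarith
  have h1 : ContinuousOn f (Set.Icc a (x + 1)) := by
    have h2 := intervalIntegral.continuousOn_primitive_interval' (h.1 (x + 1) hab)
      (Set.left_mem_uIcc)
    rw [Set.uIcc_of_le hab] at h2
    exact (h2.const_add (f a)).congr fun t ht => h.2 t ht.1
  refine (h1 x ⟨hx', by linarith⟩).mono_of_mem_nhdsWithin ?_
  rw [← Set.Ici_inter_Iic]
  exact Filter.inter_mem self_mem_nhdsWithin
    (mem_nhdsWithin_of_mem_nhds (Iic_mem_nhds (by linarith)))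

/-- The lower bound `C ≤ Re p`, which condition A only gives almost everywhere, holds at every
point of `[x₀,∞)` by continuity. -/
lemma le_re_sqrtQ {q q' : ℝ → ℂ} {x₀ C : ℝ} (hA : CondA q q' x₀ C) {x : ℝ} (hx : x₀ ≤ x) :
    C ≤ (sqrtQ q x).re := by
  obtain ⟨-, hac, -, -, -, hae⟩ := hA
  have hq := hac.continuousOn
  have hcont : ContinuousOn (fun t => (sqrtQ q t).re) (Set.Ici x₀) := by
    simp only [sqrtQ, sqrt_re]
    exact (((hq.norm.add (Complex.continuous_re.comp_continuousOn hq)).div_const 2)).sqrt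
  have hclosed := hcont.preimage_isClosed_of_isClosed isClosed_Ici (isClosed_Ici (a := C))
  have hdense := Measure.dense_of_ae hae
  have hsub := hdense.open_subset_closure_inter (isOpen_Ioi (a := x₀))
  have hmin := hsub.trans <| closure_minimal (fun t ht => by
    have h0 : x₀ ≤ t := le_of_lt ht.1
    refine ⟨h0, ?_⟩
    have h1 := ht.2 h0
    have h2 := norm_nonneg (sqrtQD q q' t / sqrtQ q t)
    simp only [Set.mem_preimage, Set.mem_Ici]
    linarith) hclosed
  have hx2 : x ∈ closure (Set.Ioi x₀) := by rwa [closure_Ioi]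
  exact (closure_minimal hmin hclosed hx2).2

/-- Stability of the square root: from `(p - w)(p + w) = l` and `‖p + w‖ ≥ Re p ≥ C`. -/
lemma re_sqrt_sub {z l : ℂ} {C : ℝ} (hC : 0 < C) (hz : C ≤ (z ^ ((1 : ℂ) / 2)).re) :
    (z ^ ((1 : ℂ) / 2)).re - ‖l‖ / C ≤ ((z - l) ^ ((1 : ℂ) / 2)).re := by
  have hp := sqrt_sq z
  have hw := sqrt_sq (z - l)
  have hw0 : 0 ≤ ((z - l) ^ ((1 : ℂ) / 2)).re := by rw [sqrt_re]; positivity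
  set p := z ^ ((1 : ℂ) / 2)
  set w := (z - l) ^ ((1 : ℂ) / 2)
  have h1 : ‖p - w‖ * ‖p + w‖ = ‖l‖ := by
    rw [← norm_mul]
    congr 1
    linear_combination hp - hw
  have h2 : C ≤ ‖p + w‖ := by
    have := re_le_norm (p + w)
    rw [add_re] at this
    linarith
  have h3 : ‖p - w‖ ≤ ‖l‖ / C := by
    rw [le_div_iff₀ hC, ← h1]
    gcongr
  have h4 := re_le_norm (p - w)
  rw [sub_re] at h4
  linarith

lemma norm_logDeriv (q q' : ℝ → ℂ) (x : ℝ) :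
    ‖sqrtQD q q' x / sqrtQ q x‖ = ‖q' x‖ / (2 * ‖q x‖) := by
  have h : sqrtQD q q' x / sqrtQ q x = q' x / (2 * q x) := by
    rw [sqrtQD, div_div, mul_assoc, ← pow_two, sqrtQ, sqrt_sq]
  simp [h]

/-- The scalar inequality behind the estimate of the logarithmic derivative: `R` stands for `Re p`,
`Q` for `‖q‖`, `S` for `‖q - l‖`, `D` for `‖q'‖` and `L` for `‖l‖`. -/
lemma scalar_ineq {R Q S D L C : ℝ} (hC : 0 < C) (hL : 0 ≤ L) (hD : 0 ≤ D) (hLC : L < C ^ 2 / 6)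
    (hR : C ≤ R) (hQ : R ^ 2 ≤ Q) (hS : Q - L ≤ S)
    (h : C + 1 / 2 * (D / (2 * Q)) ≤ R) :
    C / 2 + 1 / 2 * (D / (2 * S)) ≤ R - L / C := by
  have hR0 : 0 < R := by linarith
  have hCR : C ^ 2 ≤ R ^ 2 := by gcongr
  have hC2 : 0 < C ^ 2 := by positivity
  have hQ0 : 0 < Q := by linarith
  have hS0 : 0 < S := by linarith
  set a := 1 / 2 * (D / (2 * Q)) with ha
  have ha0 : 0 ≤ a := by positivity
  have e1 : 1 / 2 * (D / (2 * S)) = a * (Q / S) := by rw [ha]; field_simp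
  -- `1/(1 - t) ≤ 1 + 2t` for `t = L/R² ≤ 1/2`
  have e2 : Q / S ≤ 1 + 2 * (L / R ^ 2) := by
    have h1 : L ≤ L / R ^ 2 * Q := by
      rw [div_mul_eq_mul_div, le_div_iff₀ (by positivity)]
      gcongr
    have h2 : 0 ≤ L / R ^ 2 := by positivity
    rw [div_le_iff₀ hS0]
    have h3 : L / R ^ 2 * (Q / 2) ≤ L / R ^ 2 * (Q - L) := by
      gcongr
      linarith
    have h4 : L / R ^ 2 * (Q - L) ≤ L / R ^ 2 * S := by gcongr
    linarith
  have e3 : a * (L / R ^ 2) ≤ L / C := by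
    have : a ≤ R := by linarith
    calc a * (L / R ^ 2) ≤ R * (L / R ^ 2) := by gcongr
      _ = L / R := by field_simp
      _ ≤ L / C := by gcongr
  have e4 : L / C ≤ C / 6 := by
    rw [div_le_iff₀ hC]
    nlinarith
  have e5 : a * (Q / S) ≤ a * (1 + 2 * (L / R ^ 2)) := by gcongr
  rw [e1]
  linarith

/-- If `q` satisfies condition A for `x ≥ x₀` with constant `C`, then there is an
open neighborhood `Υ` of `0` such that for all `lam ∈ Υ` the potential `q - lam`
satisfies condition A for `x ≥ x₀` with the common constant `C/2`. -/
theorem statement1 (q q' : ℝ → ℂ) (x₀ C : ℝ) (hx₀ : 0 ≤ x₀)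
    (hA : CondA q q' x₀ C) :
    ∃ Υ : Set ℂ, IsOpen Υ ∧ (0 : ℂ) ∈ Υ ∧
      ∀ lam ∈ Υ, CondA (fun x => q x - lam) q' x₀ (C / 2) := by
  have hC := hA.2.2.2.2.1
  refine ⟨Metric.ball 0 (C ^ 2 / 6), Metric.isOpen_ball, Metric.mem_ball_self (by positivity), ?_⟩
  intro lam hlam
  have hl : ‖lam‖ < C ^ 2 / 6 := by simpa using hlam
  have hle := fun x (hx : x₀ ≤ x) => le_re_sqrtQ hA hx
  have hw := fun x (hx : x₀ ≤ x) => re_sqrt_sub (l := lam) hC (hle x hx)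
  have hpos : ∀ x, x₀ ≤ x → 0 < (sqrtQ (fun x => q x - lam) x).re := by
    intro x hx
    have h1 : ‖lam‖ / C < C := by
      rw [div_lt_iff₀ hC]
      nlinarith
    have h2 := hw x hx
    have h3 := hle x hx
    simp only [sqrtQ] at h3 ⊢
    linarith
  obtain ⟨hint, hac, -, -, -, hae⟩ := hA
  refine ⟨hint.sub ((locallyIntegrable_const lam).locallyIntegrableOn _), ⟨hac.1, ?_⟩,
    ⟨0, le_rfl, fun x hx => mem_piSector_zero (hpos x hx)⟩, hpos, half_pos hC, ?_⟩
  · intro x hx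
    simp only [hac.2 x hx]
    ring
  · filter_upwards [hae] with x h hx
    have h := h hx
    rw [norm_logDeriv] at h ⊢
    refine le_trans (scalar_ineq hC (norm_nonneg lam) (norm_nonneg _) hl (hle x hx) ?_
      (norm_sub_norm_le _ _) h) (hw x hx)
    have h1 : ‖q x‖ = ‖sqrtQ q x‖ ^ 2 := by rw [← norm_pow, sqrtQ, sqrt_sq]
    have h0 := hle x hx
    rw [h1]
    gcongr
    · linarith
    · exact re_le_norm _
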